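/- For all integers l and M with 1 ≤ l ≤ M, one has M!·(M+1)!/((M−l)!·(M+l+1)!) ≤ M/(M+2); in particular this quantity is strictly less than 1. -/

import Mathlib

/-!
For a fixed sum `a + b`, the product `a! * b!` grows as `a` and `b` move apart. Hence the
denominator `(M - l)! * (M + l + 1)!` is smallest at `l = 1`, where the quotient is exactly
`M / (M + 2)`.
-/

open Nat

theorem factorial_add_mul_factorial_le {m n : ℕ} (hmn : m ≤ n) (k : ℕ) :
    (m + k)! * n ! ≤ m ! * (n + k)! := by
  calc (m + k)! * n ! = m ! * n ! * (m + 1).ascFactorial k := by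
        rw [← factorial_mul_ascFactorial, mul_right_comm]
    _ ≤ m ! * n ! * (n + 1).ascFactorial k := by gcongr
    _ = m ! * (n + k)! := by rw [mul_assoc, factorial_mul_ascFactorial]

theorem factorial_mul_factorial_succ_mul_add_two_le {l M : ℕ} (hl : 1 ≤ l) (hlM : l ≤ M) :
    M ! * (M + 1)! * (M + 2) ≤ M * ((M - l)! * (M + l + 1)!) := by
  have hM : M ≠ 0 := by lia
  calc M ! * (M + 1)! * (M + 2) = M * ((M - 1)! * (M + 2)!) := by
        rw [← mul_factorial_pred hM, factorial_succ (M + 1)]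
        ring
    _ = M * ((M - l + (l - 1))! * (M + 2)!) := by
        rw [show M - l + (l - 1) = M - 1 by lia]
    _ ≤ M * ((M - l)! * (M + 2 + (l - 1))!) := by
        gcongr M * ?_
        exact factorial_add_mul_factorial_le (by lia) (l - 1)
    _ = M * ((M - l)! * (M + l + 1)!) := by
        rw [show M + 2 + (l - 1) = M + l + 1 by lia]

theorem lambda_coefficient_bound_general {K : Type*} [Semifield K] [LinearOrder K]
    [IsStrictOrderedRing K] {l M : ℕ} (hl : 1 ≤ l) (hlM : l ≤ M) :
    (M ! : K) * (M + 1)! / ((M - l)! * (M + l + 1)!) ≤ (M : K) / (M + 2) ∧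
      (M ! : K) * (M + 1)! / ((M - l)! * (M + l + 1)!) < 1 := by
  have ratio_le : (M ! : K) * (M + 1)! / ((M - l)! * (M + l + 1)!) ≤ (M : K) / (M + 2) := by
    rw [div_le_div_iff₀ (by positivity) (by positivity)]
    exact_mod_cast factorial_mul_factorial_succ_mul_add_two_le hl hlM
  have bound_lt_one : (M : K) / (M + 2) < 1 :=
    (div_lt_one (by positivity)).2 (lt_add_of_pos_right _ two_pos)
  exact ⟨ratio_le, ratio_le.trans_lt bound_lt_one⟩

/-- For `1 ≤ l ≤ M`, `M!(M+1)!/((M−l)!(M+l+1)!) ≤ M/(M+2) < 1`. -/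
theorem lambda_coefficient_bound (l M : ℕ) (h1 : 1 ≤ l) (h2 : l ≤ M) :
    ((M.factorial : ℝ) * (M + 1).factorial /
        ((M - l).factorial * (M + l + 1).factorial)) ≤ (M : ℝ) / (M + 2) ∧
    ((M.factorial : ℝ) * (M + 1).factorial /
        ((M - l).factorial * (M + l + 1).factorial)) < 1 :=
  lambda_coefficient_bound_general h1 h2
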